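/- Let h : [0,∞) → ℝ be infinitely differentiable with h(0) = 0, h'(0) = 1, and the Schoenberg sign pattern h^{(2r−1)} ≥ 0, h^{(2r)} ≤ 0 on [0,∞) for all r ≥ 1, with h not identically zero. Let x_1,...,x_n be distinct real numbers and f_1,...,f_n > 0 with Σ_i f_i = 1, and for δ > 0 define Γ_δ(a) = Σ_i f_i h((x_i − a)²/δ). Then there exists a finite δ₀ > 0 such that for every δ ≥ δ₀ the function Γ_δ has a unique global minimizer a_δ ∈ ℝ, and a_δ → x̄_f = Σ_i f_i x_i as δ → ∞. -/

import Mathlib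

open Finset Set Filter Topology

theorem aux_h (h : ℝ → ℝ)
    (hsmooth : ContDiffOn ℝ (⊤ : ℕ∞) h (Ici 0))
    (h1 : derivWithin h (Ici 0) 0 = 1)
    (hsign : ∀ r : ℕ, 1 ≤ r → ∀ D : ℝ, 0 ≤ D →
      0 ≤ iteratedDerivWithin (2 * r - 1) h (Ici 0) D ∧
        iteratedDerivWithin (2 * r) h (Ici 0) D ≤ 0) :
    ∃ (g : ℝ → ℝ) (C : ℝ), 0 ≤ C ∧ g 0 = 1 ∧ (∀ u, 0 ≤ u → HasDerivWithinAt h (g u) (Ici 0) u) ∧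
      MonotoneOn h (Ici 0) ∧
      (∀ u v, 0 ≤ u → u ≤ 1 → 0 ≤ v → v ≤ 1 → |g u - g v| ≤ C * |u - v|) := by
  have hd : DifferentiableOn ℝ h (Ici 0) := hsmooth.differentiableOn (by simp)
  have hg : ContDiffOn ℝ 1 (derivWithin h (Ici 0)) (Ici 0) :=
    hsmooth.derivWithin (uniqueDiffOn_Ici 0) (by norm_cast)
  obtain ⟨C, hC⟩ := (hg.mono (fun y (hy : y ∈ Set.Icc (0:ℝ) 1) => hy.1)).exists_lipschitzOnWith
    (by simp) (convex_Icc 0 1) isCompact_Icc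
  refine ⟨derivWithin h (Ici 0), C, C.2, h1, fun u hu => (hd u hu).hasDerivWithinAt, ?_, ?_⟩
  · apply monotoneOn_of_deriv_nonneg (convex_Ici 0) hd.continuousOn
    · exact hd.mono interior_subset
    · intro u hu
      rw [interior_Ici] at hu
      have := (hsign 1 le_rfl u (le_of_lt hu)).1
      simp only [mul_one, Nat.add_one_sub_one, iteratedDerivWithin_one] at this
      rwa [derivWithin_of_mem_nhds (Ici_mem_nhds hu)] at this
  · intro u v hu hu1 hv hv1
    have := hC.dist_le_mul u ⟨hu, hu1⟩ v ⟨hv, hv1⟩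
    simpa [Real.dist_eq] using this

/-- **Theorem 3 (rectifiable transformations).** Let `h : [0,∞) → ℝ` be infinitely
differentiable with `h 0 = 0`, `h' 0 = 1`, the Schoenberg sign pattern
(odd-order derivatives nonnegative, even-order derivatives nonpositive on `[0,∞)`),
and `h` not identically zero. For distinct reals `x 1, ..., x n` with positive weights
summing to `1` and `Γ_δ(a) = ∑ i, f i * h ((x i - a)²/δ)`, there is a finite `δ₀ > 0`
such that for every `δ ≥ δ₀` the function `Γ_δ` has a unique global minimizer `A δ`,
and `A δ → x̄_f = ∑ i, f i * x i` as `δ → ∞`. -/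
theorem rectifiable_unique_minimizer_tendsto_mean {n : ℕ} (h : ℝ → ℝ)
    (hsmooth : ContDiffOn ℝ (⊤ : ℕ∞) h (Ici 0))
    (h0 : h 0 = 0)
    (h1 : derivWithin h (Ici 0) 0 = 1)
    (hsign : ∀ r : ℕ, 1 ≤ r → ∀ D : ℝ, 0 ≤ D →
      0 ≤ iteratedDerivWithin (2 * r - 1) h (Ici 0) D ∧
        iteratedDerivWithin (2 * r) h (Ici 0) D ≤ 0)
    (hnz : ∃ D : ℝ, 0 ≤ D ∧ h D ≠ 0)
    (x : Fin n → ℝ) (hx : Function.Injective x)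
    (f : Fin n → ℝ) (hf : ∀ i, 0 < f i) (hsum : ∑ i, f i = 1) :
    ∃ δ₀ : ℝ, 0 < δ₀ ∧ ∃ A : ℝ → ℝ,
      (∀ δ : ℝ, δ₀ ≤ δ →
        (∀ b : ℝ, ∑ i, f i * h ((x i - A δ) ^ 2 / δ) ≤ ∑ i, f i * h ((x i - b) ^ 2 / δ)) ∧
        (∀ b : ℝ,
          (∀ c : ℝ, ∑ i, f i * h ((x i - b) ^ 2 / δ) ≤ ∑ i, f i * h ((x i - c) ^ 2 / δ)) →
          b = A δ)) ∧
      Tendsto A atTop (𝓝 (∑ i, f i * x i)) := by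
  obtain ⟨g, C, hC, hg0, hder, hmono, hlip⟩ := aux_h h hsmooth h1 hsign
  obtain ⟨K, hK0, hK⟩ : ∃ K : ℝ, 0 < K ∧ ∀ i, |x i| < K := by
    refine ⟨1 + ∑ i, |x i|, by positivity, fun i => ?_⟩
    have := Finset.single_le_sum (f := fun i => |x i|) (fun i _ => abs_nonneg _) (Finset.mem_univ i)

    linarith
  have hxl : ∀ i, -K < x i := fun i => (abs_lt.1 (hK i)).1
  have hxr : ∀ i, x i < K := fun i => (abs_lt.1 (hK i)).2
  set δ₀ := 16 * K ^ 2 * (C + 1) with hδ₀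
  have hδ₀pos : 0 < δ₀ := by positivity
  -- nonemptiness
  obtain ⟨i₀, hi₀⟩ : ∃ i : Fin n, True := by
    by_contra hcon
    push Not at hcon
    have : ∑ i, f i = 0 := Finset.sum_eq_zero (fun i _ => (hcon i).elim)
    linarith
  -- derivative
  have hΓ : ∀ δ : ℝ, 0 < δ → ∀ a : ℝ, HasDerivAt (fun a => ∑ i, f i * h ((x i - a) ^ 2 / δ))
      (∑ i, f i * (g ((x i - a) ^ 2 / δ) * (2 * (a - x i) / δ))) a := by
    intro δ hδ a
    apply HasDerivAt.fun_sum
    intro i _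
    apply HasDerivAt.const_mul
    have h2 : HasDerivAt (fun a => (x i - a) ^ 2 / δ) (2 * (a - x i) / δ) a := by
      have := (((hasDerivAt_id a).const_sub (x i)).pow 2).div_const δ
      refine this.congr_deriv ?_
      simp only [id]
      push_cast
      ring
    have h3 := (hder ((x i - a) ^ 2 / δ) (by positivity)).comp a (s := univ)
      h2.hasDerivWithinAt (fun y _ => by simp only [Set.mem_Ici]; positivity)
    exact hasDerivWithinAt_univ.1 h3
  have hu : ∀ δ, δ₀ ≤ δ → ∀ t, |t| ≤ 2 * K → 0 ≤ t ^ 2 / δ ∧ t ^ 2 / δ ≤ 1 ∧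
      |1 - g (t ^ 2 / δ)| ≤ C * (4 * K ^ 2) / δ ∧ 3 / 4 ≤ g (t ^ 2 / δ) := by
    intro δ hδ t ht
    have hδp : 0 < δ := by linarith
    have ht2 : t ^ 2 ≤ 4 * K ^ 2 := by
      have := pow_le_pow_left₀ (abs_nonneg t) ht 2
      rw [sq_abs] at this
      linarith
    have hk : 0 ≤ K ^ 2 * C := by positivity
    have e0 : 0 ≤ t ^ 2 / δ := by positivity
    have e1 : t ^ 2 / δ ≤ 1 := by
      rw [div_le_one hδp]
      nlinarith
    have e2 := hlip 0 (t ^ 2 / δ) le_rfl zero_le_one e0 e1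
    rw [hg0, zero_sub, abs_neg, abs_of_nonneg e0] at e2
    have e3 : C * (t ^ 2 / δ) ≤ C * (4 * K ^ 2) / δ := by
      rw [mul_div_assoc]
      gcongr
    have e4 : C * (4 * K ^ 2) / δ ≤ 1 / 4 := by
      rw [div_le_iff₀ hδp]
      nlinarith
    refine ⟨e0, e1, e2.trans e3, ?_⟩
    have := le_abs_self (1 - g (t ^ 2 / δ))
    linarith
  have hbd : ∀ i, ∀ a ∈ Icc (-K) K, |x i - a| ≤ 2 * K := by
    intro i a ha
    rw [abs_le]
    constructor <;> linarith [ha.1, ha.2, hxl i, hxr i]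
  -- critical point equation
  have hcrit : ∀ δ, δ₀ ≤ δ → ∀ a,
      (∀ c : ℝ, ∑ i, f i * h ((x i - a) ^ 2 / δ) ≤ ∑ i, f i * h ((x i - c) ^ 2 / δ)) →
      ∑ i, f i * (g ((x i - a) ^ 2 / δ) * (a - x i)) = 0 := by
    intro δ hδ a ha
    have hδp : 0 < δ := by linarith
    have hmin : IsLocalMin (fun a => ∑ i, f i * h ((x i - a) ^ 2 / δ)) a :=
      Filter.Eventually.of_forall ha
    have e := hmin.hasDerivAt_eq_zero (hΓ δ hδp a)
    have e2 : ∑ i, f i * (g ((x i - a) ^ 2 / δ) * (2 * (a - x i) / δ)) =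
        2 / δ * ∑ i, f i * (g ((x i - a) ^ 2 / δ) * (a - x i)) := by
      rw [Finset.mul_sum]
      refine Finset.sum_congr rfl fun i _ => by ring
    rw [e2] at e
    exact (mul_eq_zero.1 e).resolve_left (by positivity)
  -- strict monotonicity of the score
  have hstrict : ∀ δ, δ₀ ≤ δ → ∀ a ∈ Icc (-K) K, ∀ b ∈ Icc (-K) K, a < b →
      ∑ i, f i * (g ((x i - a) ^ 2 / δ) * (a - x i)) <
      ∑ i, f i * (g ((x i - b) ^ 2 / δ) * (b - x i)) := by
    intro δ hδ a ha b hb hab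
    have hδp : 0 < δ := by linarith
    apply Finset.sum_lt_sum_of_nonempty ⟨i₀, Finset.mem_univ _⟩
    intro i _
    apply mul_lt_mul_of_pos_left _ (hf i)
    obtain ⟨a0, a1, -, -⟩ := hu δ hδ _ (hbd i a ha)
    obtain ⟨b0, b1, -, b3⟩ := hu δ hδ _ (hbd i b hb)
    have l := hlip _ _ b0 b1 a0 a1
    have hs := hbd i a ha
    have ht := hbd i b hb
    have e1 : |(x i - b) ^ 2 / δ - (x i - a) ^ 2 / δ| ≤ (b - a) * (4 * K) / δ := by
      have : (x i - b) ^ 2 / δ - (x i - a) ^ 2 / δ = (b - a) * ((b - x i) + (a - x i)) / δ := by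
        ring
      rw [this, abs_div, abs_mul, abs_of_pos hδp, abs_of_pos (sub_pos.2 hab)]
      have : |(b - x i) + (a - x i)| ≤ 4 * K := by
        rw [abs_le] at *
        constructor <;> linarith
      have h0 : 0 ≤ b - a := by linarith
      gcongr
    have e2 : |(a - x i) * (g ((x i - b) ^ 2 / δ) - g ((x i - a) ^ 2 / δ))| ≤
        2 * K * (C * ((b - a) * (4 * K) / δ)) := by
      rw [abs_mul, abs_sub_comm a]
      have := l.trans (mul_le_mul_of_nonneg_left e1 hC)
      gcongr
    have e3 : 2 * K * (C * ((b - a) * (4 * K) / δ)) ≤ (b - a) * (1 / 2) := by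
      have : 2 * K * (C * ((b - a) * (4 * K) / δ)) = (b - a) * (8 * K ^ 2 * C / δ) := by ring
      rw [this]
      have h0 : 0 ≤ b - a := by linarith
      have : 8 * K ^ 2 * C / δ ≤ 1 / 2 := by
        rw [div_le_iff₀ hδp]
        nlinarith [sq_nonneg K]
      gcongr
    have e4 := neg_abs_le ((a - x i) * (g ((x i - b) ^ 2 / δ) - g ((x i - a) ^ 2 / δ)))
    have e5 : (b - a) * (3 / 4) ≤ (b - a) * g ((x i - b) ^ 2 / δ) :=
      mul_le_mul_of_nonneg_left b3 (by linarith)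
    nlinarith
  -- clamping
  have hclamp : ∀ δ, δ₀ ≤ δ → ∀ b c : ℝ, (K ≤ b ∧ c = K ∨ b ≤ -K ∧ c = -K) →
      ∑ i, f i * h ((x i - c) ^ 2 / δ) ≤ ∑ i, f i * h ((x i - b) ^ 2 / δ) := by
    intro δ hδ b c hbc
    have hδp : 0 < δ := by linarith
    apply Finset.sum_le_sum
    intro i _
    apply mul_le_mul_of_nonneg_left _ (hf i).le
    apply hmono
    · simp only [Set.mem_Ici]; positivity
    · simp only [Set.mem_Ici]; positivity
    · apply div_le_div_of_nonneg_right _ hδp.le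
      rcases hbc with ⟨hb, rfl⟩ | ⟨hb, rfl⟩ <;> nlinarith [hxl i, hxr i]
  have hend : ∀ δ, δ₀ ≤ δ →
      0 < ∑ i, f i * (g ((x i - K) ^ 2 / δ) * (K - x i)) ∧
      ∑ i, f i * (g ((x i - -K) ^ 2 / δ) * (-K - x i)) < 0 := by
    intro δ hδ
    constructor
    · apply Finset.sum_pos _ ⟨i₀, Finset.mem_univ _⟩
      intro i _
      have := (hu δ hδ _ (hbd i K ⟨by linarith, le_rfl⟩)).2.2.2
      exact mul_pos (hf i) (mul_pos (by linarith) (by linarith [hxr i]))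
    · apply Finset.sum_neg _ ⟨i₀, Finset.mem_univ _⟩
      intro i _
      have := (hu δ hδ _ (hbd i (-K) ⟨le_rfl, by linarith⟩)).2.2.2
      exact mul_neg_of_pos_of_neg (hf i) (mul_neg_of_pos_of_neg (by linarith) (by linarith [hxl i]))
  have hin : ∀ δ, δ₀ ≤ δ → ∀ b,
      (∀ c : ℝ, ∑ i, f i * h ((x i - b) ^ 2 / δ) ≤ ∑ i, f i * h ((x i - c) ^ 2 / δ)) →
      b ∈ Icc (-K) K := by
    intro δ hδ b hb
    by_contra hcon
    rw [Set.mem_Icc, not_and_or, not_le, not_le] at hcon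
    rcases hcon with hc | hc
    · have := hcrit δ hδ (-K) fun c => (hclamp δ hδ b (-K) (Or.inr ⟨hc.le, rfl⟩)).trans (hb c)
      exact (hend δ hδ).2.ne this
    · have := hcrit δ hδ K fun c => (hclamp δ hδ b K (Or.inl ⟨hc.le, rfl⟩)).trans (hb c)
      exact (hend δ hδ).1.ne this.symm
  have hex : ∀ δ, ∃ a, δ₀ ≤ δ →
      ∀ c : ℝ, ∑ i, f i * h ((x i - a) ^ 2 / δ) ≤ ∑ i, f i * h ((x i - c) ^ 2 / δ) := by
    intro δ
    by_cases hδ : δ₀ ≤ δ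
    swap
    · exact ⟨0, fun h => absurd h hδ⟩
    have hδp : 0 < δ := by linarith
    obtain ⟨a, ha, hmin⟩ := (isCompact_Icc (a := -K) (b := K)).exists_isMinOn
      (nonempty_Icc.2 (by linarith))
      (f := fun a => ∑ i, f i * h ((x i - a) ^ 2 / δ))
      (fun y _ => (hΓ δ hδp y).continuousAt.continuousWithinAt)
    refine ⟨a, fun _ c => ?_⟩
    rcases le_total K c with hc | hc
    · exact (hmin (show K ∈ Icc (-K) K from ⟨by linarith, le_rfl⟩)).trans
        (hclamp δ hδ c K (Or.inl ⟨hc, rfl⟩))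
    rcases le_total c (-K) with hc' | hc'
    · exact (hmin (show -K ∈ Icc (-K) K from ⟨le_rfl, by linarith⟩)).trans
        (hclamp δ hδ c (-K) (Or.inr ⟨hc', rfl⟩))
    · exact hmin (show c ∈ Icc (-K) K from ⟨hc', hc⟩)
  choose A hA using hex
  refine ⟨δ₀, hδ₀pos, A, fun δ hδ => ⟨hA δ hδ, fun b hb => ?_⟩, ?_⟩
  · have cb := hcrit δ hδ b hb
    have ca := hcrit δ hδ _ (hA δ hδ)
    have ib := hin δ hδ b hb
    have ia := hin δ hδ _ (hA δ hδ)
    rcases lt_trichotomy b (A δ) with hlt | heq | hlt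
    · have := hstrict δ hδ b ib _ ia hlt
      linarith
    · exact heq
    · have := hstrict δ hδ _ ia b ib hlt
      linarith
  · rw [tendsto_iff_dist_tendsto_zero]
    have hlim : Tendsto (fun δ : ℝ => C * (4 * K ^ 2) * (2 * K) / δ) atTop (𝓝 0) :=
      tendsto_const_nhds.div_atTop tendsto_id
    refine squeeze_zero' (Filter.Eventually.of_forall fun _ => dist_nonneg) ?_ hlim
    filter_upwards [eventually_ge_atTop δ₀] with δ hδ
    have ca := hcrit δ hδ _ (hA δ hδ)
    have ia := hin δ hδ _ (hA δ hδ)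
    have key : A δ - ∑ i, f i * x i =
        ∑ i, f i * ((1 - g ((x i - A δ) ^ 2 / δ)) * (A δ - x i)) := by
      have e : ∑ i, f i * ((1 - g ((x i - A δ) ^ 2 / δ)) * (A δ - x i)) =
          (∑ i, f i) * A δ - ∑ i, f i * x i -
          ∑ i, f i * (g ((x i - A δ) ^ 2 / δ) * (A δ - x i)) := by
        rw [Finset.sum_mul, ← Finset.sum_sub_distrib, ← Finset.sum_sub_distrib]
        exact Finset.sum_congr rfl fun i _ => by ring
      rw [e, ca, hsum]
      ring
    rw [Real.dist_eq, key]
    refine (Finset.abs_sum_le_sum_abs _ _).trans ?_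
    have : C * (4 * K ^ 2) * (2 * K) / δ = ∑ i, f i * (C * (4 * K ^ 2) / δ * (2 * K)) := by
      rw [← Finset.sum_mul, hsum]
      ring
    rw [this]
    refine Finset.sum_le_sum fun i _ => ?_
    rw [abs_mul, abs_mul, abs_of_pos (hf i), abs_sub_comm (A δ)]
    have e1 := (hu δ hδ _ (hbd i _ ia)).2.2.1
    exact mul_le_mul_of_nonneg_left
      (mul_le_mul e1 (hbd i _ ia) (abs_nonneg _) ((abs_nonneg _).trans e1)) (hf i).le
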